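/- arXiv:1210.1559 — 5 statements merged into one kernel-verified Lean document; each statement's English description precedes it below -/
import Mathlib

section
/- For every σ ∈ Σ₊ and every a ∈ O_K one has ρ_Q(σ(a)) = γ₀(σ|_{K₀})(ρ_{P₊}(a)), and for every σ ∈ Σ₋ and every a ∈ O_K one has ρ_Q(σ(a)) = γ₀(σ|_{K₀})(ρ_{P₋}(a)) (equalities in k_Q, where k_{P₀} is viewed as a subfield of k_Q). In particular there are unique maps γ_± : Σ_± → Gal(k_{P₀}/F_p) satisfying ρ_Q(σ(a)) = γ_±(σ)(ρ_{P_±}(a)) for all σ ∈ Σ_± and all a ∈ O_K, namely γ_±(σ) = γ₀(σ|_{K₀}). -/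
set_option synthInstance.maxHeartbeats 1000000
set_option maxHeartbeats 1000000

open NumberField

namespace Pap2

variable (K₀ K L : Type*) [Field K₀] [NumberField K₀] [Field K] [NumberField K]
  [Field L] [NumberField L] [Algebra K₀ K] [Algebra K L] [Algebra K₀ L]
  [IsScalarTower K₀ K L] (ι : L →+* ℂ)
  (P₀ : Ideal (𝓞 K₀)) (Q : Ideal (𝓞 L))

/-- The characterizing property of `γ₀ : Σ₀ → Gal(k_{P₀}/𝔽_p)` (from Lemma 3.1):
`ρ_Q(σ(a)) = γ₀(σ)(ρ_{P₀}(a))` for all `σ ∈ Σ₀`, `a ∈ O_{K₀}`. -/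
def CharProp (hQ0 : Ideal.comap (RingOfIntegers.mapRingHom (algebraMap K₀ L)) Q = P₀)
    (γ₀ : (K₀ →+* ℂ) → RingAut (𝓞 K₀ ⧸ P₀)) : Prop :=
  ∀ (σ : K₀ →+* ℂ) (τ : K₀ →+* L), ι.comp τ = σ →
    ∀ a : 𝓞 K₀,
      Ideal.Quotient.mk Q (RingOfIntegers.mapRingHom τ a)
        = Ideal.quotientMap Q (RingOfIntegers.mapRingHom (algebraMap K₀ L)) hQ0.ge
            (γ₀ σ (Ideal.Quotient.mk P₀ a))

/-- The embedding `k_{P₀} ↪ k_Q` induced by `O_{K₀} ⊆ O_L`. -/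
def emb (hQ0 : Ideal.comap (RingOfIntegers.mapRingHom (algebraMap K₀ L)) Q = P₀) :
    (𝓞 K₀ ⧸ P₀) →+* (𝓞 L ⧸ Q) :=
  Ideal.quotientMap Q (RingOfIntegers.mapRingHom (algebraMap K₀ L)) hQ0.ge

/-- The natural map `k_{P₀} → O_K/P` for a prime `P` of `O_K` lying over `P₀`. -/
def qmap (P : Ideal (𝓞 K))
    (h : Ideal.comap (RingOfIntegers.mapRingHom (algebraMap K₀ K)) P = P₀) :
    (𝓞 K₀ ⧸ P₀) →+* (𝓞 K ⧸ P) :=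
  Ideal.quotientMap P (RingOfIntegers.mapRingHom (algebraMap K₀ K)) h.ge

/-- Restriction `G = Gal(L/ℚ) → Σ`, `g ↦ ι ∘ g|_K`. -/
def alpha (g : L ≃ₐ[ℚ] L) : K →+* ℂ := ι.comp ((g : L →+* L).comp (algebraMap K L))

/-- The subgroup `H = Gal(L/K)` of `G`. -/
def HH : Set (L ≃ₐ[ℚ] L) := {g | ∀ x : K, g (algebraMap K L x) = algebraMap K L x}

/-- The decomposition group `G_Q ⊆ G` of `Q`. -/
def GQ : Set (L ≃ₐ[ℚ] L) :=
  {g | Ideal.comap (RingOfIntegers.mapRingHom (g : L →+* L)) Q = Q}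

/-- `Σ₊ = α(G_Q·H)`. -/
def SigPlus : Set (K →+* ℂ) :=
  {σ | ∃ d ∈ GQ L Q, ∃ h ∈ HH K L, σ = alpha K L ι (d * h)}

/-- `Σ₋ = α(G_Q·τ_∗·H)`. -/
def SigMinus (τstar : L ≃ₐ[ℚ] L) : Set (K →+* ℂ) :=
  {σ | ∃ d ∈ GQ L Q, ∃ h ∈ HH K L, σ = alpha K L ι (d * τstar * h)}

end Pap2

/-!
Every `σ ∈ α(G_Q·g·H)` is `d ∘ g` on `K` for some `d ∈ G_Q`, so it carries the prime
`P = g⁻¹(Q) ∩ O_K` into `Q`, and `a ↦ ρ_Q(σ(a))` depends only on `a` modulo `P`. As `O_{K₀}`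
surjects onto `O_K/P`, this map is determined by its values on `O_{K₀}`, where it is
`γ₀(σ|_{K₀})`. The cosets `Σ₊` and `Σ₋` are the cases `g = 1` and `g = τ_∗`; for the latter,
`P = P₋` because `∗` is an involution.
-/

namespace Pap2

section CommutativeAlgebra

variable {A B R : Type*} [CommRing A] [CommRing B] [Semiring R] {I : Ideal A} {J : Ideal B}
  {f : A →+* B} {hIJ : I ≤ J.comap f}

/-- The residue map `ρ_J : B → A/I` of an ideal `J` of `B` whose residue ring is identified with
`A/I` through the isomorphism induced by `f`; for `A = O_{K₀}`, `B = O_K` and `J = P_±` this is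
`ρ_{P_±} : O_K → k_{P₀}`. -/
noncomputable def residueMap (hf : Function.Bijective (Ideal.quotientMap J f hIJ)) :
    B →+* A ⧸ I :=
  ((RingEquiv.ofBijective _ hf).symm : B ⧸ J →+* A ⧸ I).comp (Ideal.Quotient.mk J)

theorem residueMap_surjective (hf : Function.Bijective (Ideal.quotientMap J f hIJ)) :
    Function.Surjective (residueMap hf) :=
  (RingEquiv.ofBijective _ hf).symm.surjective.comp Ideal.Quotient.mk_surjective

theorem quotientMap_residueMap (hf : Function.Bijective (Ideal.quotientMap J f hIJ)) (b : B) :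
    Ideal.quotientMap J f hIJ (residueMap hf b) = Ideal.Quotient.mk J b :=
  (RingEquiv.ofBijective _ hf).apply_symm_apply _

theorem eq_apply_residueMap (hf : Function.Bijective (Ideal.quotientMap J f hIJ))
    {φ : B →+* R} {ψ : A ⧸ I →+* R} (hφ : ∀ b ∈ J, φ b = 0)
    (hψ : ∀ a, φ (f a) = ψ (Ideal.Quotient.mk I a)) (b : B) :
    φ b = ψ (residueMap hf b) := by
  have lift_comp : (Ideal.Quotient.lift J φ hφ).comp (Ideal.quotientMap J f hIJ) = ψ :=
    Ideal.Quotient.ringHom_ext (RingHom.ext hψ)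
  calc φ b = Ideal.Quotient.lift J φ hφ (Ideal.quotientMap J f hIJ (residueMap hf b)) := by
        rw [quotientMap_residueMap, Ideal.Quotient.lift_mk]
    _ = ψ (residueMap hf b) := RingHom.congr_fun lift_comp _

theorem map_le_comap_of_involutive {f : A →+* A} (hf : Function.Involutive f) (I : Ideal A) :
    I.map f ≤ I.comap f :=
  Ideal.map_le_iff_le_comap.2 fun x hx ↦ by rwa [Ideal.mem_comap, Ideal.mem_comap, hf x]

end CommutativeAlgebra

theorem involutive_of_finrank_eq_two {F E : Type*} [Field F] [Field E] [Algebra F E]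
    (hE : Module.finrank F E = 2) (σ : E ≃ₐ[F] E) : Function.Involutive σ := by
  have : FiniteDimensional F E := Module.finite_of_finrank_eq_succ hE
  have order_le : orderOf σ ≤ 2 := orderOf_le_card_univ.trans (AlgEquiv.card_le.trans_eq hE)
  have order_pos : 0 < orderOf σ := orderOf_pos σ
  have sq_eq_one : σ ^ 2 = 1 :=
    orderOf_dvd_iff_pow_eq_one.1 (by interval_cases orderOf σ <;> decide)
  exact fun x ↦ DFunLike.congr_fun (sq σ ▸ sq_eq_one) x

section Embeddings

-- `SigMinus K L ι Q g` is `α(G_Q·g·H)` for every `g`, not only for a lift `τ_∗` of `∗`.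
variable {K L : Type*} [Field K] [Field L] [NumberField L] [Algebra K L]
  {ι : L →+* ℂ} {Q : Ideal (𝓞 L)} {g : L ≃ₐ[ℚ] L} {σ : K →+* ℂ}

theorem alpha_mul_of_mem_HH {h : L ≃ₐ[ℚ] L} (hh : h ∈ HH K L) :
    alpha K L ι (g * h) = alpha K L ι g :=
  RingHom.ext fun x ↦ congr_arg (fun y ↦ ι (g y)) (hh x)

theorem sigMinus_one : SigMinus K L ι Q 1 = SigPlus K L ι Q := by
  simp only [SigMinus, SigPlus, mul_one]

theorem exists_eq_alpha_mul_of_mem_sigMinus (hσ : σ ∈ SigMinus K L ι Q g) :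
    ∃ d ∈ GQ L Q, σ = alpha K L ι (d * g) := by
  obtain ⟨d, hd, h, hh, rfl⟩ := hσ
  exact ⟨d, hd, alpha_mul_of_mem_HH hh⟩

theorem exists_comp_eq_of_mem_sigMinus (hσ : σ ∈ SigMinus K L ι Q g) :
    ∃ τ : K →+* L, ι.comp τ = σ := by
  obtain ⟨d, -, rfl⟩ := exists_eq_alpha_mul_of_mem_sigMinus hσ
  exact ⟨_, rfl⟩

theorem comap_eq_of_mem_sigMinus (hσ : σ ∈ SigMinus K L ι Q g) {τ : K →+* L}
    (hτ : ι.comp τ = σ) :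
    Q.comap (RingOfIntegers.mapRingHom τ) =
      Q.comap (RingOfIntegers.mapRingHom ((g : L →+* L).comp (algebraMap K L))) := by
  obtain ⟨d, hd, rfl⟩ := exists_eq_alpha_mul_of_mem_sigMinus hσ
  obtain rfl : τ = ((d * g : L ≃ₐ[ℚ] L) : L →+* L).comp (algebraMap K L) :=
    RingHom.ext fun x ↦ ι.injective (RingHom.congr_fun hτ x)
  exact congr_arg
    (Ideal.comap (RingOfIntegers.mapRingHom ((g : L →+* L).comp (algebraMap K L)))) hd

theorem map_comap_le_comap_of_finrank_eq_two {K₀ : Type*} [Field K₀] [Algebra K₀ K]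
    (hK : Module.finrank K₀ K = 2) {star : K ≃ₐ[K₀] K}
    (hg : ∀ x : K, g (algebraMap K L x) = algebraMap K L (star x)) :
    (Q.comap (RingOfIntegers.mapRingHom (algebraMap K L))).map
        (RingOfIntegers.mapRingHom (star : K →+* K)) ≤
      Q.comap (RingOfIntegers.mapRingHom ((g : L →+* L).comp (algebraMap K L))) := by
  have star_involutive :
      Function.Involutive (RingOfIntegers.mapRingHom (star : K →+* K)) := fun x ↦
    RingOfIntegers.ext (involutive_of_finrank_eq_two hK star x)
  rw [show (g : L →+* L).comp (algebraMap K L) = (algebraMap K L).comp (star : K →+* K) from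
    RingHom.ext hg]
  exact map_le_comap_of_involutive star_involutive _

end Embeddings

section Reduction

variable {K₀ K L : Type*} [Field K₀] [Field K] [Field L] [Algebra K₀ K] [Algebra K₀ L]
  {P₀ : Ideal (𝓞 K₀)} {P : Ideal (𝓞 K)} {Q : Ideal (𝓞 L)} {ι : L →+* ℂ}
  {hQ0 : Q.comap (RingOfIntegers.mapRingHom (algebraMap K₀ L)) = P₀}
  {hP : P.comap (RingOfIntegers.mapRingHom (algebraMap K₀ K)) = P₀}
  {hb : Function.Bijective (qmap K₀ K P₀ P hP)} {σ : K →+* ℂ}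

variable (ι hQ0 hb σ) in
/-- The automorphism `γ` of `k_{P₀}` is the reduction of the embedding `σ` of `K`:
`ρ_Q(σ(a)) = γ(ρ_P(a))` for all `a ∈ O_K`. As in `CharProp`, `σ(a)` is read in `L` through a
factorization of `σ` over `ι`, so the condition is empty if `σ(K)` is not contained in `ι(L)`. -/
def ReducesTo (γ : RingAut (𝓞 K₀ ⧸ P₀)) : Prop :=
  ∀ τ : K →+* L, ι.comp τ = σ → ∀ a : 𝓞 K,
    Ideal.Quotient.mk Q (RingOfIntegers.mapRingHom τ a) =
      emb K₀ L P₀ Q hQ0 (γ (residueMap hb a))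

theorem CharProp.reducesTo {γ₀ : (K₀ →+* ℂ) → RingAut (𝓞 K₀ ⧸ P₀)}
    (hγ₀ : CharProp K₀ L ι P₀ Q hQ0 γ₀)
    (hσ : ∀ τ : K →+* L, ι.comp τ = σ → P ≤ Q.comap (RingOfIntegers.mapRingHom τ)) :
    ReducesTo ι hQ0 hb σ (γ₀ (σ.comp (algebraMap K₀ K))) := by
  rintro τ rfl a
  let ψ : 𝓞 K₀ ⧸ P₀ →+* 𝓞 L ⧸ Q := (emb K₀ L P₀ Q hQ0).comp
    (γ₀ ((ι.comp τ).comp (algebraMap K₀ K)) : 𝓞 K₀ ⧸ P₀ →+* 𝓞 K₀ ⧸ P₀)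
  exact eq_apply_residueMap hb (φ := (Ideal.Quotient.mk Q).comp (RingOfIntegers.mapRingHom τ))
    (ψ := ψ) (fun _ hx ↦ Ideal.Quotient.eq_zero_iff_mem.2 (hσ τ rfl hx))
    (hγ₀ _ (τ.comp (algebraMap K₀ K)) rfl) a

theorem ReducesTo.unique {γ γ' : RingAut (𝓞 K₀ ⧸ P₀)} (hγ : ReducesTo ι hQ0 hb σ γ)
    (hγ' : ReducesTo ι hQ0 hb σ γ') (hσ : ∃ τ : K →+* L, ι.comp τ = σ) : γ = γ' := by
  obtain ⟨τ, hτ⟩ := hσ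
  have emb_injective : Function.Injective (emb K₀ L P₀ Q hQ0) :=
    Ideal.quotientMap_injective' hQ0.le
  exact RingEquiv.ext <| (residueMap_surjective hb).forall.2 fun a ↦
    emb_injective ((hγ τ hτ a).symm.trans (hγ' τ hτ a))

end Reduction

end Pap2

open Pap2 in
theorem stmt2_general {K₀ K L : Type*} [Field K₀] [Field K] [Field L] [NumberField L]
    [Algebra K₀ K] [Algebra K L] [Algebra K₀ L]
    {ι : L →+* ℂ} {P₀ : Ideal (𝓞 K₀)} {P : Ideal (𝓞 K)} {Q : Ideal (𝓞 L)} (g : L ≃ₐ[ℚ] L)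
    (hP : P ≤ Q.comap (RingOfIntegers.mapRingHom ((g : L →+* L).comp (algebraMap K L))))
    {hQ0 : Q.comap (RingOfIntegers.mapRingHom (algebraMap K₀ L)) = P₀}
    {hP₀ : P.comap (RingOfIntegers.mapRingHom (algebraMap K₀ K)) = P₀}
    (hb : Function.Bijective (qmap K₀ K P₀ P hP₀))
    {γ₀ : (K₀ →+* ℂ) → RingAut (𝓞 K₀ ⧸ P₀)} (hγ₀ : CharProp K₀ L ι P₀ Q hQ0 γ₀) :
    (∀ σ ∈ SigMinus K L ι Q g, ReducesTo ι hQ0 hb σ (γ₀ (σ.comp (algebraMap K₀ K)))) ∧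
      ∃! γ : {σ : K →+* ℂ // σ ∈ SigMinus K L ι Q g} → RingAut (𝓞 K₀ ⧸ P₀),
        ∀ σ, ReducesTo ι hQ0 hb σ.1 (γ σ) := by
  have reduces : ∀ σ ∈ SigMinus K L ι Q g,
      ReducesTo ι hQ0 hb σ (γ₀ (σ.comp (algebraMap K₀ K))) := fun σ hσ ↦
    hγ₀.reducesTo fun τ hτ ↦ hP.trans_eq (comap_eq_of_mem_sigMinus hσ hτ).symm
  exact ⟨reduces, fun σ ↦ γ₀ (σ.1.comp (algebraMap K₀ K)), fun σ ↦ reduces σ.1 σ.2,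
    fun γ hγ ↦ funext fun σ ↦
      (hγ σ).unique (reduces σ.1 σ.2) (exists_comp_eq_of_mem_sigMinus σ.2)⟩

open Pap2 in
/-- For `σ ∈ Σ_±` and `a ∈ O_K` one has `ρ_Q(σ(a)) = γ₀(σ|_{K₀})(ρ_{P_±}(a))` in `k_Q`; in
particular there are unique maps `γ_± : Σ_± → Gal(k_{P₀}/𝔽_p)` with
`ρ_Q(σ(a)) = γ_±(σ)(ρ_{P_±}(a))`, namely `γ_±(σ) = γ₀(σ|_{K₀})`. Here the residue fields of
`P_±` are identified with `k_{P₀}` via the isomorphisms induced by `O_{K₀} ⊆ O_K`. -/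
theorem stmt2 (p : ℕ) (hp : p.Prime)
    (K₀ K L : Type*) [Field K₀] [NumberField K₀] [Field K] [NumberField K]
    [Field L] [NumberField L] [Algebra K₀ K] [Algebra K L] [Algebra K₀ L]
    [IsScalarTower K₀ K L] [IsGalois ℚ L]
    (star : K ≃ₐ[K₀] K) (hstar : star ≠ AlgEquiv.refl) (hquad : Module.finrank K₀ K = 2)
    (ι : L →+* ℂ)
    (hfull : ∀ σ : K₀ →+* ℂ, ∃ τ : K₀ →+* L, ι.comp τ = σ)
    (P₀ : Ideal (𝓞 K₀)) [P₀.IsMaximal] (e₀ : ℕ) (he₀ : 1 ≤ e₀)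
    (hP₀ : Ideal.span {(p : 𝓞 K₀)} = P₀ ^ e₀)
    (Pp Pm : Ideal (𝓞 K)) [Pp.IsMaximal] [Pm.IsMaximal] (hPpm : Pp ≠ Pm)
    (hsplit : Ideal.map (RingOfIntegers.mapRingHom (algebraMap K₀ K)) P₀ = Pp * Pm)
    (hstarP : Ideal.map (RingOfIntegers.mapRingHom (star : K →+* K)) Pp = Pm)
    (Q : Ideal (𝓞 L)) [Q.IsMaximal]
    (hQp : Ideal.comap (RingOfIntegers.mapRingHom (algebraMap K L)) Q = Pp)
    (hQ0 : Ideal.comap (RingOfIntegers.mapRingHom (algebraMap K₀ L)) Q = P₀)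
    (hcp : Ideal.comap (RingOfIntegers.mapRingHom (algebraMap K₀ K)) Pp = P₀)
    (hcm : Ideal.comap (RingOfIntegers.mapRingHom (algebraMap K₀ K)) Pm = P₀)
    (hbp : Function.Bijective (qmap K₀ K P₀ Pp hcp))
    (hbm : Function.Bijective (qmap K₀ K P₀ Pm hcm))
    (τstar : L ≃ₐ[ℚ] L) (hτ : ∀ x : K, τstar (algebraMap K L x) = algebraMap K L (star x))
    (γ₀ : (K₀ →+* ℂ) → RingAut (𝓞 K₀ ⧸ P₀))
    (hγ₀ : CharProp K₀ L ι P₀ Q hQ0 γ₀) :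
    (∀ σ ∈ SigPlus K L ι Q, ∀ τ : K →+* L, ι.comp τ = σ →
      ∀ a : 𝓞 K,
        Ideal.Quotient.mk Q (RingOfIntegers.mapRingHom τ a)
          = emb K₀ L P₀ Q hQ0
              (γ₀ (σ.comp (algebraMap K₀ K))
                ((RingEquiv.ofBijective _ hbp).symm (Ideal.Quotient.mk Pp a)))) ∧
    (∀ σ ∈ SigMinus K L ι Q τstar, ∀ τ : K →+* L, ι.comp τ = σ →
      ∀ a : 𝓞 K,
        Ideal.Quotient.mk Q (RingOfIntegers.mapRingHom τ a)
          = emb K₀ L P₀ Q hQ0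
              (γ₀ (σ.comp (algebraMap K₀ K))
                ((RingEquiv.ofBijective _ hbm).symm (Ideal.Quotient.mk Pm a)))) ∧
    (∃! γp : {σ : K →+* ℂ // σ ∈ SigPlus K L ι Q} → RingAut (𝓞 K₀ ⧸ P₀),
      ∀ (σ : {σ : K →+* ℂ // σ ∈ SigPlus K L ι Q}) (τ : K →+* L), ι.comp τ = σ.1 →
        ∀ a : 𝓞 K,
          Ideal.Quotient.mk Q (RingOfIntegers.mapRingHom τ a)
            = emb K₀ L P₀ Q hQ0
                (γp σ ((RingEquiv.ofBijective _ hbp).symm (Ideal.Quotient.mk Pp a)))) ∧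
    (∃! γm : {σ : K →+* ℂ // σ ∈ SigMinus K L ι Q τstar} → RingAut (𝓞 K₀ ⧸ P₀),
      ∀ (σ : {σ : K →+* ℂ // σ ∈ SigMinus K L ι Q τstar}) (τ : K →+* L), ι.comp τ = σ.1 →
        ∀ a : 𝓞 K,
          Ideal.Quotient.mk Q (RingOfIntegers.mapRingHom τ a)
            = emb K₀ L P₀ Q hQ0
                (γm σ ((RingEquiv.ofBijective _ hbm).symm (Ideal.Quotient.mk Pm a)))) := by
  have plus := sigMinus_one (K := K) (ι := ι) (Q := Q) ▸ stmt2_general 1 hQp.ge hbp hγ₀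
  have minus := stmt2_general τstar
    (hstarP ▸ hQp ▸ map_comap_le_comap_of_finrank_eq_two hquad hτ) hbm hγ₀
  exact ⟨plus.1, minus.1, plus.2, minus.2⟩
end

section
/- For every i ∈ {1,…,n} the following are equivalent: (1) there exists ξ ∈ ℤ/f with ν_ξ(i) = 0; (2) ν_ξ(i) = 0 for all ξ ∈ ℤ/f; (3) for all ξ ∈ ℤ/f one has w_ξ(i) = i and λ_ξ(i) = 0. -/
noncomputable section
namespace Pap

/-- `u^m` as a Laurent series. -/
def U (R : Type*) [CommRing R] (m : ℤ) : LaurentSeries R := HahnSeries.single m 1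

/-- The permutation matrix `A_w`. -/
def permMatrix (R : Type*) [CommRing R] {n : ℕ} (w : Equiv.Perm (Fin n)) :
    Matrix (Fin n) (Fin n) (LaurentSeries R) :=
  Matrix.of fun i j => if i = w j then 1 else 0

/-- The matrix `A_w · u^λ ∈ GL_n(R((u)))`. -/
def xMat (R : Type*) [CommRing R] {n : ℕ} (w : Equiv.Perm (Fin n)) (lam : Fin n → ℤ) :
    Matrix (Fin n) (Fin n) (LaurentSeries R) :=
  permMatrix R w * Matrix.diagonal fun t => U R (lam t)

end Pap
end

/-!
Products of the matrices `A_w · u^λ` are again of this form: the permutations multiply, and the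
exponent in column `i` is the sum of the `λ`'s met along the trajectory of `i`. So `μ_ξ(i)` is a sum
of nonnegative integers. If it vanishes, every `λ` met along the trajectory is zero, hence the
trajectory never increases; as it returns to `i`, it is constant. Since the trajectory uses all
indices of `ℤ/f`, every `w_η` fixes `i` and every `λ_η(i)` vanishes.
-/

namespace Pap

section Trajectory

variable {α M : Type*}

/-- The sum of the weights met by `j` under a composite of weighted permutations `(w, λ)`. As in a
product of matrices, the last entry of the list acts first; the step from `i` to `w i` has weight
`λ i`. -/
def pathWeight [AddZero M] : List (Equiv.Perm α × (α → M)) → α → M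
  | [], _ => 0
  | p :: L, j => p.2 ((L.map Prod.fst).prod j) + pathWeight L j

lemma prod_map_fst_apply_eq_self {L : List (Equiv.Perm α × M)} {i : α}
    (h : ∀ p ∈ L, p.1 i = i) : (L.map Prod.fst).prod i = i := by
  induction L with
  | nil => rfl
  | cons p L ih =>
    obtain ⟨hp, hL⟩ := List.forall_mem_cons.1 h
    simp [ih hL, hp]

lemma pathWeight_eq_zero_of_forall_fixed [AddZeroClass M] {L : List (Equiv.Perm α × (α → M))}
    {i : α} (h : ∀ p ∈ L, p.1 i = i ∧ p.2 i = 0) : pathWeight L i = 0 := by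
  induction L with
  | nil => rfl
  | cons p L ih =>
    obtain ⟨hp, hL⟩ := List.forall_mem_cons.1 h
    simp [pathWeight, prod_map_fst_apply_eq_self fun q hq => (hL q hq).1, hp.2, ih hL]

variable [AddCommMonoid M] [PartialOrder M] [IsOrderedAddMonoid M]
  {L : List (Equiv.Perm α × (α → M))}

lemma pathWeight_nonneg (h0 : ∀ p ∈ L, 0 ≤ p.2) (i : α) : 0 ≤ pathWeight L i := by
  induction L with
  | nil => exact le_rfl
  | cons p L ih =>
    obtain ⟨hp, hL⟩ := List.forall_mem_cons.1 h0
    exact add_nonneg (hp _) (ih hL)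

lemma pathWeight_cons_eq_zero_iff {p : Equiv.Perm α × (α → M)} (h0 : ∀ q ∈ p :: L, 0 ≤ q.2)
    {i : α} : pathWeight (p :: L) i = 0 ↔
      p.2 ((L.map Prod.fst).prod i) = 0 ∧ pathWeight L i = 0 := by
  obtain ⟨hp, hL⟩ := List.forall_mem_cons.1 h0
  exact add_eq_zero_iff_of_nonneg (hp _) (pathWeight_nonneg hL i)

variable [PartialOrder α]

lemma prod_map_fst_apply_le_of_pathWeight_eq_zero (h0 : ∀ p ∈ L, 0 ≤ p.2)
    (hle : ∀ p ∈ L, ∀ j, p.2 j = 0 → p.1 j ≤ j) {i : α} (hi : pathWeight L i = 0) :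
    (L.map Prod.fst).prod i ≤ i := by
  induction L with
  | nil => exact le_rfl
  | cons p L ih =>
    obtain ⟨hp, hL⟩ := (pathWeight_cons_eq_zero_iff h0).1 hi
    obtain ⟨hple, hLle⟩ := List.forall_mem_cons.1 hle
    exact (hple _ hp).trans (ih (List.forall_mem_cons.1 h0).2 hLle hL)

lemma forall_fixed_of_pathWeight_eq_zero (h0 : ∀ p ∈ L, 0 ≤ p.2)
    (hle : ∀ p ∈ L, ∀ j, p.2 j = 0 → p.1 j ≤ j) {i : α} (hfix : (L.map Prod.fst).prod i = i)
    (hi : pathWeight L i = 0) : ∀ p ∈ L, p.1 i = i ∧ p.2 i = 0 := by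
  induction L with
  | nil => simp
  | cons p L ih =>
    obtain ⟨hp, hL⟩ := (pathWeight_cons_eq_zero_iff h0).1 hi
    obtain ⟨hple, hLle⟩ := List.forall_mem_cons.1 hle
    have hL0 := (List.forall_mem_cons.1 h0).2
    have hpfix : p.1 ((L.map Prod.fst).prod i) = i := hfix
    have hLi_le := prod_map_fst_apply_le_of_pathWeight_eq_zero hL0 hLle hL
    have hLfix : (L.map Prod.fst).prod i = i := hLi_le.antisymm (hpfix.ge.trans (hple _ hp))
    rw [hLfix] at hp hpfix
    exact List.forall_mem_cons.2 ⟨⟨hpfix, hp⟩, ih hL0 hLle hLfix hL⟩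

lemma pathWeight_eq_zero_iff (h0 : ∀ p ∈ L, 0 ≤ p.2)
    (hle : ∀ p ∈ L, ∀ j, p.2 j = 0 → p.1 j ≤ j) {i : α} (hfix : (L.map Prod.fst).prod i = i) :
    pathWeight L i = 0 ↔ ∀ p ∈ L, p.1 i = i ∧ p.2 i = 0 :=
  ⟨forall_fixed_of_pathWeight_eq_zero h0 hle hfix, pathWeight_eq_zero_of_forall_fixed⟩

end Trajectory

section Matrix

variable {R : Type*} [CommRing R] {n : ℕ}

lemma U_zero : U R 0 = 1 := rfl

lemma U_add (a b : ℤ) : U R (a + b) = U R a * U R b := by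
  simp [U, HahnSeries.single_mul_single]

lemma U_ne_zero [Nontrivial R] (a : ℤ) : U R a ≠ 0 :=
  HahnSeries.single_ne_zero one_ne_zero

lemma U_injective [Nontrivial R] : Function.Injective (U R) := fun a b h => by
  simpa [U, HahnSeries.order_single] using congrArg HahnSeries.order h

lemma xMat_apply (w : Equiv.Perm (Fin n)) (lam : Fin n → ℤ) (i j : Fin n) :
    xMat R w lam i j = if i = w j then U R (lam j) else 0 := by
  simp [xMat, permMatrix, Matrix.mul_diagonal]

lemma xMat_one_left (lam : Fin n → ℤ) :
    xMat R 1 lam = Matrix.diagonal fun t => U R (lam t) := by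
  ext1 i j
  by_cases h : i = j <;> simp [xMat_apply, h]

lemma xMat_mul_xMat (w w' : Equiv.Perm (Fin n)) (lam lam' : Fin n → ℤ) :
    xMat R w lam * xMat R w' lam' = xMat R (w * w') fun j => lam (w' j) + lam' j := by
  ext1 i j
  simp [Matrix.mul_apply, xMat_apply, U_add]

lemma prod_map_xMat (L : List (Equiv.Perm (Fin n) × (Fin n → ℤ))) :
    (L.map fun p => xMat R p.1 p.2).prod = xMat R (L.map Prod.fst).prod (pathWeight L) := by
  induction L with
  | nil => simp [pathWeight, xMat_one_left, U_zero]
  | cons p L ih => simp only [List.map_cons, List.prod_cons, ih, xMat_mul_xMat, pathWeight]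

variable [Nontrivial R]

lemma xMat_inj {w w' : Equiv.Perm (Fin n)} {lam lam' : Fin n → ℤ} :
    xMat R w lam = xMat R w' lam' ↔ w = w' ∧ lam = lam' := by
  refine ⟨fun h => ?_, fun ⟨hw, hlam⟩ => hw ▸ hlam ▸ rfl⟩
  have hentry (j : Fin n) : w j = w' j ∧ lam j = lam' j := by
    have hj : U R (lam j) = if w j = w' j then U R (lam' j) else 0 := by
      simpa [xMat_apply] using congrFun₂ h (w j) j
    split_ifs at hj with hw
    · exact ⟨hw, U_injective hj⟩
    · exact absurd hj (U_ne_zero _)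
  exact ⟨Equiv.ext fun j => (hentry j).1, funext fun j => (hentry j).2⟩

lemma eq_zero_iff_of_prod_map_xMat_eq_diagonal {L : List (Equiv.Perm (Fin n) × (Fin n → ℤ))}
    (h0 : ∀ p ∈ L, 0 ≤ p.2) (hle : ∀ p ∈ L, ∀ j, p.2 j = 0 → p.1 j ≤ j) {μ : Fin n → ℤ}
    (hprod : (L.map fun p => xMat R p.1 p.2).prod = Matrix.diagonal fun t => U R (μ t))
    (i : Fin n) : μ i = 0 ↔ ∀ p ∈ L, p.1 i = i ∧ p.2 i = 0 := by
  rw [prod_map_xMat, ← xMat_one_left, xMat_inj] at hprod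
  obtain ⟨hperm, rfl⟩ := hprod
  exact pathWeight_eq_zero_iff h0 hle (by rw [hperm, Equiv.Perm.one_apply])

end Matrix

lemma forall_lt_sub_natCast_iff {f m : ℕ} [NeZero f] (hfm : f ≤ m) (P : ZMod f → Prop)
    (ξ : ZMod f) : (∀ k < m, P (ξ - (k : ZMod f))) ↔ ∀ η, P η := by
  refine ⟨fun h η => ?_, fun h k _ => h _⟩
  simpa using h (ξ - η).val ((ZMod.val_lt _).trans_le hfm)

end Pap

open Pap in
theorem stmt3_general {R : Type*} [CommRing R] [Nontrivial R] {n f m : ℕ} [NeZero f] (hfm : f ≤ m)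
    {w : ZMod f → Equiv.Perm (Fin n)} {lam : ZMod f → Fin n → ℤ}
    (hcond : ∀ (ξ : ZMod f) (i : Fin n), 0 ≤ lam ξ i ∧ (lam ξ i = 0 → w ξ i ≤ i))
    {μ : ZMod f → Fin n → ℤ}
    (hprod : ∀ ξ : ZMod f,
      ((List.range m).map fun k : ℕ =>
          xMat R (w (ξ - (k : ZMod f))) (lam (ξ - (k : ZMod f)))).prod
        = Matrix.diagonal fun t => U R (μ ξ t)) (i : Fin n) :
    [∃ ξ, (μ ξ i : ℚ) / m = 0, ∀ ξ, (μ ξ i : ℚ) / m = 0,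
      ∀ ξ, w ξ i = i ∧ lam ξ i = 0].TFAE := by
  have hm : m ≠ 0 := (Nat.pos_of_neZero f).trans_le hfm |>.ne'
  have hμ (ξ : ZMod f) : (μ ξ i : ℚ) / m = 0 ↔ ∀ η, w η i = i ∧ lam η i = 0 := by
    let L := (List.range m).map fun k : ℕ => (w (ξ - (k : ZMod f)), lam (ξ - (k : ZMod f)))
    have hL : μ ξ i = 0 ↔ ∀ p ∈ L, p.1 i = i ∧ p.2 i = 0 :=
      eq_zero_iff_of_prod_map_xMat_eq_diagonal (R := R)
        (List.forall_mem_map.2 fun _ _ j => (hcond _ j).1)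
        (List.forall_mem_map.2 fun _ _ j => (hcond _ j).2)
        (by rw [List.map_map]; exact hprod ξ) i
    rw [div_eq_zero_iff, Int.cast_eq_zero, Nat.cast_eq_zero, or_iff_left hm, hL,
      List.forall_mem_map]
    simp only [List.mem_range]
    exact forall_lt_sub_natCast_iff hfm (fun η => w η i = i ∧ lam η i = 0) ξ
  simp only [hμ, exists_const, forall_const]
  tfae_finish

open Pap in
theorem stmt3 (n f N : ℕ) (hn : 1 ≤ n) (hf : 1 ≤ f) (hN : 1 ≤ N)
    (w : ZMod f → Equiv.Perm (Fin n)) (lam : ZMod f → Fin n → ℤ)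
    (hcond : ∀ (ξ : ZMod f) (i : Fin n), 0 ≤ lam ξ i ∧ (lam ξ i = 0 → w ξ i ≤ i))
    (μ : ZMod f → Fin n → ℤ)
    (hprod : ∀ ξ : ZMod f,
      (((List.range (N * f)).map fun k =>
          xMat ℚ (w (ξ - (k : ZMod f))) (lam (ξ - (k : ZMod f)))).prod)
        = Matrix.diagonal fun t => U ℚ (μ ξ t)) :
    ∀ i : Fin n,
      ((∃ ξ : ZMod f, (μ ξ i : ℚ) / (N * f) = 0) ↔
        (∀ ξ : ZMod f, (μ ξ i : ℚ) / (N * f) = 0)) ∧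
      ((∀ ξ : ZMod f, (μ ξ i : ℚ) / (N * f) = 0) ↔
        (∀ ξ : ZMod f, w ξ i = i ∧ lam ξ i = 0)) := by
  have : NeZero f := ⟨by lia⟩
  -- The cast on `k` in `hprod` elaborates to a monadic coercion of `List.range` to `List (ZMod f)`.
  have h := stmt3_general (R := ℚ) (Nat.le_mul_of_pos_left f hN) hcond
    (by simpa [List.map_eq_flatMap, List.flatMap_assoc] using hprod)
  simp only [Nat.cast_mul] at h
  exact fun i => ⟨(h i).out 0 1, (h i).out 1 2⟩
end

section
/- Let R be a nonzero commutative ring whose only idempotents are 0 and 1 (equivalently, Spec R is connected), and let a ∈ R((u)) be a unit. Then there exist integers n ≤ n₀ such that the coefficients a_i of a satisfy: a_i = 0 for i < n, a_i is nilpotent for n ≤ i < n₀, and a_{n₀} is a unit of R. Moreover, for an arbitrary commutative ring R and a unit a ∈ R((u))^×, such integers and elements exist Zariski-locally on R, i.e., there exist f₁,…,f_m ∈ R generating the unit ideal such that the image of a in each R_{f_j}((u)) admits such data. -/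
noncomputable section
namespace Pap

variable (R : Type*) [CommRing R]

/-- Coefficientwise map of Laurent series along a ring map. -/
def lsMap {S : Type*} [CommRing S] (f : R →+* S) (x : LaurentSeries R) : LaurentSeries S where
  coeff g := f (x.coeff g)
  isPWO_support' := x.isPWO_support'.mono (fun g hg => by
    simp only [Function.mem_support] at hg ⊢
    intro h; exact hg (by rw [h, map_zero]))

end Pap
end

/-!
If `a * b = 1`, reducing modulo a prime gives inverse series over a domain, whose orders add up to
`0`; hence `aᵢ * bⱼ` is nilpotent whenever `i + j < 0`. The constant coefficient of `a * b` is a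
finite sum of products `aᵢ * bⱼ` with `i + j = 0`, so these products generate the unit ideal. Where
`aᵢ * bⱼ` is invertible, so are `aᵢ` and `bⱼ`, and then all earlier `aₖ` are nilpotent because
`aₖ * bⱼ` is. Two distinct products of the sum have nilpotent product, so if `R` has no nontrivial
idempotents one of them is already a unit of `R`.
-/

namespace Pap

section TrivialIdempotents

variable {R : Type*} [CommSemiring R]

lemma isUnit_or_isUnit_of_isCoprime_of_isNilpotent_mul
    (hR : ∀ e : R, IsIdempotentElem e → e = 0 ∨ e = 1) {x y : R} (hxy : IsCoprime x y)
    (hnil : IsNilpotent (x * y)) : IsUnit x ∨ IsUnit y := by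
  obtain ⟨n, hn⟩ := hnil
  obtain ⟨u, v, huv⟩ : IsCoprime (x ^ (n + 1)) (y ^ (n + 1)) := hxy.pow
  have hprod : u * x ^ (n + 1) * (v * y ^ (n + 1)) = 0 := by
    rw [mul_mul_mul_comm, ← mul_pow, pow_succ, hn, zero_mul, mul_zero]
  have hidem : IsIdempotentElem (u * x ^ (n + 1)) := by
    simpa only [IsIdempotentElem, mul_add, hprod, add_zero, mul_one] using
      congrArg (u * x ^ (n + 1) * ·) huv
  rcases hR _ hidem with h | h
  · rw [h, zero_add] at huv
    exact .inr (isUnit_pow_succ_iff.1 (.of_mul_eq_one_right _ huv))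
  · exact .inl (isUnit_pow_succ_iff.1 (.of_mul_eq_one_right _ h))

lemma exists_isUnit_of_sum_eq_one [Nontrivial R]
    (hR : ∀ e : R, IsIdempotentElem e → e = 0 ∨ e = 1) {ι : Type*} {s : Finset ι} {f : ι → R}
    (hsum : ∑ i ∈ s, f i = 1)
    (hnil : (s : Set ι).Pairwise fun i j => IsNilpotent (f i * f j)) :
    ∃ i ∈ s, IsUnit (f i) := by
  classical
  by_contra! hunit
  suffices ∀ i ∈ s, IsNilpotent (f i) from
    not_isNilpotent_one (hsum ▸ isNilpotent_sum this)
  intro i hi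
  have hadd : f i + ∑ j ∈ s.erase i, f j = 1 := (Finset.add_sum_erase s f hi).trans hsum
  have hmul : IsNilpotent (f i * ∑ j ∈ s.erase i, f j) := by
    rw [Finset.mul_sum]
    refine isNilpotent_sum fun j hj => ?_
    exact hnil hi (Finset.mem_of_mem_erase hj) (Finset.ne_of_mem_erase hj).symm
  have hrest : IsUnit (∑ j ∈ s.erase i, f j) :=
    (isUnit_or_isUnit_of_isCoprime_of_isNilpotent_mul hR ⟨1, 1, by simpa using hadd⟩
      hmul).resolve_left (hunit i hi)
  exact (hrest.isNilpotent_mul_unit_of_commute_iff (Commute.all _ _)).1 hmul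

end TrivialIdempotents

/-- The shape of the coefficients of a unit of `R((u))`: up to some exponent they vanish, then they
are nilpotent, and then a unit occurs. The bound `n` may be any lower bound of the support not
exceeding `n₀`, so the nilpotent range may be empty or contain zeros. -/
def HasUnitCoeffAfterNilpotents {Γ R : Type*} [LinearOrder Γ] [MonoidWithZero R]
    (x : HahnSeries Γ R) : Prop :=
  ∃ n n₀ : Γ, n ≤ n₀ ∧ (∀ i, i < n → x.coeff i = 0) ∧
    (∀ i, n ≤ i → i < n₀ → IsNilpotent (x.coeff i)) ∧ IsUnit (x.coeff n₀)

lemma HasUnitCoeffAfterNilpotents.of_isUnit_coeff {Γ R : Type*} [Zero Γ] [LinearOrder Γ]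
    [MonoidWithZero R] {x : HahnSeries Γ R} {i : Γ} (hnil : ∀ k < i, IsNilpotent (x.coeff k))
    (hunit : IsUnit (x.coeff i)) : HasUnitCoeffAfterNilpotents x :=
  ⟨min x.order i, i, min_le_right _ _,
    fun _ hk => HahnSeries.coeff_eq_zero_of_lt_order (hk.trans_le (min_le_left _ _)),
    fun k _ hk => hnil k hk, hunit⟩

section HahnSeries

lemma orderTop_le_orderTop_map {Γ R S : Type*} [LinearOrder Γ] [Zero R] [Zero S]
    (x : HahnSeries Γ R) {F : Type*} [FunLike F R S] [ZeroHomClass F R S] (f : F) :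
    x.orderTop ≤ (x.map f).orderTop :=
  HahnSeries.le_orderTop_iff_forall.2 fun _ hj => by
    rw [HahnSeries.map_coeff, HahnSeries.coeff_eq_zero_of_lt_orderTop hj, map_zero]

variable {Γ R : Type*} [AddCommMonoid Γ] [LinearOrder Γ] [IsOrderedCancelAddMonoid Γ] [CommRing R]

lemma isNilpotent_coeff_mul_coeff_of_lt_orderTop {a b : HahnSeries Γ R} {i j : Γ}
    (hij : ((i + j : Γ) : WithTop Γ) < (a * b).orderTop) :
    IsNilpotent (a.coeff i * b.coeff j) := by
  rw [nilpotent_iff_mem_prime]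
  intro p hp
  let π : R →+* R ⧸ p := Ideal.Quotient.mk p
  have hmap : (a * b).map π = a.map π * b.map π := HahnSeries.map_mul (π : R →ₙ+* R ⧸ p)
  by_contra hmem
  obtain ⟨ha, hb⟩ : π (a.coeff i) ≠ 0 ∧ π (b.coeff j) ≠ 0 := by
    rwa [← mul_ne_zero_iff, ← map_mul, Ne, Ideal.Quotient.eq_zero_iff_mem]
  have hle : ((a * b).map π).orderTop ≤ (i + j : Γ) := by
    rw [hmap, HahnSeries.orderTop_mul, WithTop.coe_add]
    exact add_le_add (HahnSeries.orderTop_le_of_coeff_ne_zero ha)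
      (HahnSeries.orderTop_le_of_coeff_ne_zero hb)
  exact (hij.trans_le (orderTop_le_orderTop_map _ π)).not_ge hle

variable {a b : HahnSeries Γ R}

lemma isNilpotent_coeff_mul_coeff_of_mul_eq_one (hab : a * b = 1) {i j : Γ} (hij : i + j < 0) :
    IsNilpotent (a.coeff i * b.coeff j) := by
  refine isNilpotent_coeff_mul_coeff_of_lt_orderTop ((WithTop.coe_lt_coe.2 hij).trans_le ?_)
  rw [hab]
  exact HahnSeries.zero_le_orderTop_iff.2 HahnSeries.order_one.ge

lemma isNilpotent_coeff_mul_coeff_mul_of_ne (hab : a * b = 1) {p q : Γ × Γ} (hp : p.1 + p.2 = 0)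
    (hq : q.1 + q.2 = 0) (hpq : p ≠ q) :
    IsNilpotent (a.coeff p.1 * b.coeff p.2 * (a.coeff q.1 * b.coeff q.2)) := by
  wlog hlt : p.1 < q.1 generalizing p q
  · have hne : p.1 ≠ q.1 := fun h =>
      hpq (Prod.ext h (add_left_cancel (h ▸ hp.trans hq.symm)))
    rw [mul_comm]
    exact this hq hp hpq.symm (lt_of_le_of_ne (not_lt.1 hlt) hne.symm)
  have hnil : IsNilpotent (a.coeff p.1 * b.coeff q.2) :=
    isNilpotent_coeff_mul_coeff_of_mul_eq_one hab (hq ▸ add_lt_add_left hlt q.2)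
  have hswap : a.coeff p.1 * b.coeff p.2 * (a.coeff q.1 * b.coeff q.2) =
      a.coeff p.1 * b.coeff q.2 * (a.coeff q.1 * b.coeff p.2) := by ring
  rw [hswap]
  exact (Commute.all _ _).isNilpotent_mul_right hnil

lemma HasUnitCoeffAfterNilpotents.map_of_isUnit_coeff_mul_coeff {S : Type*} [CommSemiring S]
    (hab : a * b = 1) {i j : Γ} (hij : i + j = 0) (φ : R →+* S)
    (hunit : IsUnit (φ (a.coeff i * b.coeff j))) : HasUnitCoeffAfterNilpotents (a.map φ) := by
  rw [map_mul, IsUnit.mul_iff] at hunit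
  obtain ⟨ha, hb⟩ := hunit
  refine .of_isUnit_coeff (fun k hk => ?_) ha
  have hnil : IsNilpotent (φ (a.coeff k) * φ (b.coeff j)) := by
    rw [← map_mul]
    exact (isNilpotent_coeff_mul_coeff_of_mul_eq_one hab (hij ▸ add_lt_add_left hk j)).map φ
  exact (hb.isNilpotent_mul_unit_of_commute_iff (Commute.all _ _)).1 hnil

lemma exists_finset_sum_coeff_mul_coeff_eq_one (hab : a * b = 1) :
    ∃ s : Finset (Γ × Γ), (∀ p ∈ s, p.1 + p.2 = 0) ∧
      ∑ p ∈ s, a.coeff p.1 * b.coeff p.2 = 1 := by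
  refine ⟨Finset.antidiagonal a.isPWO_support b.isPWO_support 0, fun p hp => ?_, ?_⟩
  · exact (Finset.mem_antidiagonal.1 hp).2.2
  · rw [← HahnSeries.coeff_mul, hab, HahnSeries.coeff_one, if_pos rfl]

end HahnSeries

end Pap

open Pap in
theorem stmt7_general {Γ R : Type*} [AddCommMonoid Γ] [LinearOrder Γ]
    [IsOrderedCancelAddMonoid Γ] [CommRing R] (a : HahnSeries Γ R) (ha : IsUnit a) :
    ((Nontrivial R ∧ ∀ e : R, IsIdempotentElem e → e = 0 ∨ e = 1) →
      HasUnitCoeffAfterNilpotents a) ∧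
    (∃ (m : ℕ) (fs : Fin m → R), Ideal.span (Set.range fs) = ⊤ ∧
      ∀ j : Fin m, HasUnitCoeffAfterNilpotents
        (a.map (algebraMap R (Localization.Away (fs j))))) := by
  obtain ⟨b, hab⟩ := ha.exists_right_inv
  obtain ⟨s, hs, hsum⟩ := exists_finset_sum_coeff_mul_coeff_eq_one hab
  refine ⟨fun ⟨_, hR⟩ => ?_, s.card,
    fun j => a.coeff (s.equivFin.symm j).1.1 * b.coeff (s.equivFin.symm j).1.2, ?_, fun j => ?_⟩
  · obtain ⟨p, hp, hunit⟩ := exists_isUnit_of_sum_eq_one hR hsum fun p hp q hq hpq =>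
      isNilpotent_coeff_mul_coeff_mul_of_ne hab (hs p hp) (hs q hq) hpq
    exact .map_of_isUnit_coeff_mul_coeff hab (hs p hp) (RingHom.id R) hunit
  · rw [Ideal.eq_top_iff_one, ← hsum]
    exact sum_mem fun p hp => Ideal.subset_span ⟨s.equivFin ⟨p, hp⟩, by simp⟩
  · exact .map_of_isUnit_coeff_mul_coeff hab (hs _ (s.equivFin.symm j).2) _
      (IsLocalization.Away.algebraMap_isUnit _)

open Pap in
/-- Structure of the units of `R((u))`: over a connected base the coefficients consist of
zeros, then nilpotents, then a unit; over a general base such data exist Zariski-locally. -/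
theorem stmt7 (R : Type*) [CommRing R] (a : LaurentSeries R) (ha : IsUnit a) :
    ((Nontrivial R ∧ ∀ e : R, IsIdempotentElem e → e = 0 ∨ e = 1) →
      ∃ n n₀ : ℤ, n ≤ n₀ ∧ (∀ i, i < n → a.coeff i = 0) ∧
        (∀ i, n ≤ i → i < n₀ → IsNilpotent (a.coeff i)) ∧ IsUnit (a.coeff n₀)) ∧
    (∃ (m : ℕ) (fs : Fin m → R), Ideal.span (Set.range fs) = ⊤ ∧
      ∀ j : Fin m, ∃ n n₀ : ℤ, n ≤ n₀ ∧
        (∀ i, i < n → (lsMap R (algebraMap R (Localization.Away (fs j))) a).coeff i = 0) ∧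
        (∀ i, n ≤ i → i < n₀ →
          IsNilpotent ((lsMap R (algebraMap R (Localization.Away (fs j))) a).coeff i)) ∧
        IsUnit ((lsMap R (algebraMap R (Localization.Away (fs j))) a).coeff n₀)) :=
  stmt7_general a ha
end

section
/- Let n ≥ 1, 0 ≤ r ≤ n, and let w ∈ W_{n,r}. Define λ ∈ {0,1}^n by λ(i) = 0 if w^{-1}(i) > i and λ(i) = 1 if w^{-1}(i) < i. Then Σ over pairs 1 ≤ i < j ≤ n with w^{-1}(i) < w^{-1}(j) of |λ(i) − λ(j)|, plus Σ over pairs 1 ≤ i < j ≤ n with w^{-1}(i) > w^{-1}(j) of |λ(i) − λ(j) + 1|, equals N_w. (The left-hand side is the Iwahori–Matsumoto length ℓ(u^λ·w) of the element u^λ·w of the extended affine Weyl group S_n ⋉ ℤ^n of GL_n.) -/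
/-!
Re-index both sums by pairs of positions instead of pairs of values. The vector `λ` then records
which positions are weak excedances, so `|λ (σ i) - λ (σ j)|` detects a non-inverted pair `i < j`
of different kinds, which is an alignment of type `b` or `b̃`, and `|λ (σ j) - λ (σ i) + 1|`
is the sum of the indicators that `j` is a weak excedance and that `i` is an anti-excedance, which
on the inverted pairs count the nestings of types `a` and `ã`. Treating fixed points as weak
excedances makes this work for every permutation.
-/

namespace Pap

variable (n : ℕ)

/-- `σ` has no fixed points and exactly `r` indices with `σ(i) < i`. -/
def Wnr (r : ℕ) (σ : Equiv.Perm (Fin n)) : Prop :=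
  (∀ i, σ i ≠ i) ∧ (Finset.univ.filter fun i : Fin n => σ i < i).card = r

/-- `a_σ = |{(i,j) : i < j < σ(j) < σ(i)}|`. -/
def aP (σ : Equiv.Perm (Fin n)) : ℕ :=
  (Finset.univ.filter fun p : Fin n × Fin n =>
    p.1 < p.2 ∧ p.2 < σ p.2 ∧ σ p.2 < σ p.1).card

/-- `ã_σ = |{(i,j) : σ(j) < σ(i) < i < j}|`. -/
def atP (σ : Equiv.Perm (Fin n)) : ℕ :=
  (Finset.univ.filter fun p : Fin n × Fin n =>
    σ p.2 < σ p.1 ∧ σ p.1 < p.1 ∧ p.1 < p.2).card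

/-- `b_σ = |{(i,j) : σ(i) < i < j < σ(j)}|`. -/
def bP (σ : Equiv.Perm (Fin n)) : ℕ :=
  (Finset.univ.filter fun p : Fin n × Fin n =>
    σ p.1 < p.1 ∧ p.1 < p.2 ∧ p.2 < σ p.2).card

/-- `b̃_σ = |{(i,j) : i < σ(i) < σ(j) < j}|`. -/
def btP (σ : Equiv.Perm (Fin n)) : ℕ :=
  (Finset.univ.filter fun p : Fin n × Fin n =>
    p.1 < σ p.1 ∧ σ p.1 < σ p.2 ∧ σ p.2 < p.2).card

/-- `N_σ`. -/
def NP (σ : Equiv.Perm (Fin n)) : ℕ := aP n σ + atP n σ + bP n σ + btP n σ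

/-- The translation part `λ(w)`. -/
def lamOf (w : Equiv.Perm (Fin n)) : Fin n → ℤ := fun i => if i < w⁻¹ i then 0 else 1

end Pap

section Alignments

open Finset

variable {α : Type*} [LinearOrder α]

/-- The `0/1` vector marking the values `σ i` of the weak excedances `i ≤ σ i` of `σ` by `1`. For
`α = Fin n` it is the translation part `Pap.lamOf n σ`. -/
def weakExcedanceVector (σ : Equiv.Perm α) : α → ℤ :=
  fun i => if i < σ⁻¹ i then 0 else 1

theorem weakExcedanceVector_apply_perm (σ : Equiv.Perm α) (i : α) :
    weakExcedanceVector σ (σ i) = if σ i < i then 0 else 1 := by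
  simp [weakExcedanceVector]

theorem abs_weakExcedanceVector_sub (σ : Equiv.Perm α) (i j : α) :
    |weakExcedanceVector σ (σ i) - weakExcedanceVector σ (σ j)| =
      (if σ i < i ∧ j ≤ σ j then 1 else 0) + (if i ≤ σ i ∧ σ j < j then 1 else 0) := by
  simp only [weakExcedanceVector_apply_perm, ← not_lt]
  by_cases hi : σ i < i <;> by_cases hj : σ j < j <;> simp [hi, hj]

theorem abs_weakExcedanceVector_sub_add_one (σ : Equiv.Perm α) (i j : α) :
    |weakExcedanceVector σ (σ j) - weakExcedanceVector σ (σ i) + 1| =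
      (if j ≤ σ j then 1 else 0) + (if σ i < i then 1 else 0) := by
  simp only [weakExcedanceVector_apply_perm, ← not_lt]
  by_cases hi : σ i < i <;> by_cases hj : σ j < j <;> simp [hi, hj]

variable [Fintype α]

/-- The Iwahori–Matsumoto length of the element `u^lam · σ` of the extended affine Weyl group,
given by its closed formula as a sum over the pairs `i < j` of values of `σ`. -/
def iwahoriMatsumotoLength (lam : α → ℤ) (σ : Equiv.Perm α) : ℤ :=
  (∑ p : α × α with p.1 < p.2 ∧ σ⁻¹ p.1 < σ⁻¹ p.2, |lam p.1 - lam p.2|) +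
    ∑ p : α × α with p.1 < p.2 ∧ σ⁻¹ p.2 < σ⁻¹ p.1, |lam p.1 - lam p.2 + 1|

/-- The alignments of `σ`, in the sense of Corteel, formed by two weak excedances: pairs of nested
upper arcs `i ⟶ σ i`, fixed points counting as upper arcs. -/
def alignmentsEE (σ : Equiv.Perm α) : Finset (α × α) :=
  {p | p.1 < p.2 ∧ p.2 ≤ σ p.2 ∧ σ p.2 < σ p.1}

/-- The alignments of `σ` formed by two anti-excedances: pairs of nested lower arcs. -/
def alignmentsNN (σ : Equiv.Perm α) : Finset (α × α) :=
  {p | σ p.2 < σ p.1 ∧ σ p.1 < p.1 ∧ p.1 < p.2}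

/-- The alignments of `σ` formed by an anti-excedance and a weak excedance to its right: the two
arcs are disjoint and point away from each other. -/
def alignmentsNE (σ : Equiv.Perm α) : Finset (α × α) :=
  {p | σ p.1 < p.1 ∧ p.1 < p.2 ∧ p.2 ≤ σ p.2}

/-- The alignments of `σ` formed by a weak excedance and an anti-excedance to its right: the two
arcs are disjoint and point towards each other. -/
def alignmentsEN (σ : Equiv.Perm α) : Finset (α × α) :=
  {p | p.1 ≤ σ p.1 ∧ σ p.1 < σ p.2 ∧ σ p.2 < p.2}

/-- The number of alignments of `σ`, which extends `Pap.NP` from derangements to all permutations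
by treating fixed points as weak excedances. -/
def alignmentNumber (σ : Equiv.Perm α) : ℕ :=
  #(alignmentsEE σ) + #(alignmentsNN σ) + #(alignmentsNE σ) + #(alignmentsEN σ)

theorem iwahoriMatsumotoLength_eq_sum_positions (lam : α → ℤ) (σ : Equiv.Perm α) :
    iwahoriMatsumotoLength lam σ =
      (∑ p : α × α with p.1 < p.2 ∧ σ p.1 < σ p.2, |lam (σ p.1) - lam (σ p.2)|) +
        ∑ p : α × α with p.1 < p.2 ∧ σ p.2 < σ p.1, |lam (σ p.2) - lam (σ p.1) + 1| := by
  unfold iwahoriMatsumotoLength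
  congr 1
  · exact (sum_equiv (σ.prodCongr σ) (by simp [and_comm]) (by simp)).symm
  · exact (sum_equiv ((Equiv.prodComm α α).trans (σ.prodCongr σ))
      (by simp [and_comm]) (by simp)).symm

theorem sum_noninversions_eq_card_alignments (σ : Equiv.Perm α) :
    ∑ p : α × α with p.1 < p.2 ∧ σ p.1 < σ p.2,
        |weakExcedanceVector σ (σ p.1) - weakExcedanceVector σ (σ p.2)| =
      (#(alignmentsNE σ) + #(alignmentsEN σ) : ℤ) := by
  simp only [abs_weakExcedanceVector_sub, sum_add_distrib, sum_boole, filter_filter]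
  congr 3 <;> ext ⟨i, j⟩ <;> simp only [alignmentsNE, alignmentsEN, mem_filter_univ] <;> grind

theorem sum_inversions_eq_card_alignments (σ : Equiv.Perm α) :
    ∑ p : α × α with p.1 < p.2 ∧ σ p.2 < σ p.1,
        |weakExcedanceVector σ (σ p.2) - weakExcedanceVector σ (σ p.1) + 1| =
      (#(alignmentsEE σ) + #(alignmentsNN σ) : ℤ) := by
  simp only [abs_weakExcedanceVector_sub_add_one, sum_add_distrib, sum_boole, filter_filter]
  congr 3 <;> ext ⟨i, j⟩ <;> simp only [alignmentsEE, alignmentsNN, mem_filter_univ] <;> tauto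

theorem stmt14_general (σ : Equiv.Perm α) :
    iwahoriMatsumotoLength (weakExcedanceVector σ) σ = alignmentNumber σ := by
  rw [iwahoriMatsumotoLength_eq_sum_positions, sum_noninversions_eq_card_alignments,
    sum_inversions_eq_card_alignments, alignmentNumber]
  push_cast
  ring

theorem alignmentNumber_eq_NP {n : ℕ} {σ : Equiv.Perm (Fin n)}
    (hσ : σ ∈ derangements (Fin n)) : alignmentNumber σ = Pap.NP n σ := by
  have le_iff_lt (i : Fin n) : i ≤ σ i ↔ i < σ i := (hσ i).symm.le_iff_lt
  simp only [alignmentNumber, alignmentsEE, alignmentsNN, alignmentsNE, alignmentsEN, le_iff_lt,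
    Pap.NP, Pap.aP, Pap.atP, Pap.bP, Pap.btP]

end Alignments

theorem stmt14 (n r : ℕ) (hn : 1 ≤ n) (hr : r ≤ n) (w : Equiv.Perm (Fin n))
    (hw : Pap.Wnr n r w) :
    (∑ p ∈ Finset.univ.filter
        (fun p : Fin n × Fin n => p.1 < p.2 ∧ w⁻¹ p.1 < w⁻¹ p.2),
        |Pap.lamOf n w p.1 - Pap.lamOf n w p.2|)
      + (∑ p ∈ Finset.univ.filter
        (fun p : Fin n × Fin n => p.1 < p.2 ∧ w⁻¹ p.2 < w⁻¹ p.1),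
        |Pap.lamOf n w p.1 - Pap.lamOf n w p.2 + 1|) = (Pap.NP n w : ℤ) := by
  rw [← alignmentNumber_eq_NP hw.1]
  exact stmt14_general w
end

section
/- Let n ≥ 2 and 1 ≤ r ≤ n−1. Then there exists σ ∈ W_{n,r} with N_σ = N_{n,r}; consequently the maximum of N_σ over σ ∈ W_{n,r} equals N_{n,r} = min((r−1)·(n−r), r·(n−r−1)). -/
/-!
Draw an arc `i → σ i` for every `i`, above the line for an excedance and below it for an
anti-excedance, and count the pairs `(e, d)` of an excedance and an anti-excedance. The intervals
spanned by the two arcs are disjoint for `b_σ + b̃_σ` of these pairs; otherwise `σ d ≤ e < d` or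
`e < σ d < σ e`. As a permutation leaves every initial segment as often as it enters it, the `d`
with `σ d ≤ e < d` are as many as the upper arcs over the starting point `e`: the arc of `e` itself,
those that cover it (summing to `a_σ`) and those that cross it from the left. Likewise the `e` with
`e < σ d < σ e` are as many as the lower arcs that cover the arc of `d` (summing to `ã_σ`) or cross
it from the left. Hence, for `r` anti-excedances and no fixed points,
`N_σ = (r - 1) * (n - r) - (number of crossings)`. As `N_σ` is invariant under inversion, the same
identity for `σ⁻¹` gives the other upper bound. For `2 * r ≤ n`, a cycle nested inside `r - 1`
concentric transpositions has no crossings; the case `2 * r > n` follows by passing to the inverse.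
-/

namespace Pap

open Finset Equiv

section PairCounting

variable {α β : Type*} [Fintype β] {s : Finset α} {R : α → β → Prop} [∀ a b, Decidable (R a b)]

theorem card_eq_sum_card_filter_left {T : Finset (α × β)}
    (hT : ∀ a b, (a, b) ∈ T ↔ a ∈ s ∧ R a b) : #T = ∑ a ∈ s, #{b | R a b} := by
  rw [← card_sigma]
  exact card_equiv (sigmaEquivProd α β).symm (by simp [hT])

theorem card_eq_sum_card_filter_right {T : Finset (β × α)}
    (hT : ∀ a b, (b, a) ∈ T ↔ a ∈ s ∧ R a b) : #T = ∑ a ∈ s, #{b | R a b} := by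
  rw [← card_map (prodComm β α).toEmbedding]
  exact card_eq_sum_card_filter_left (by simp [hT])

end PairCounting

theorem card_filter_and_not_apply_eq_card_filter_apply_and_not {α : Type*} [Fintype α]
    (σ : Perm α) (p : α → Prop) [DecidablePred p] :
    #{i | p i ∧ ¬ p (σ i)} = #{i | p (σ i) ∧ ¬ p i} := by
  classical
  have h : #{i | p i} = #{i | p (σ i)} := (card_equiv σ (by simp)).symm
  simpa only [filter_and_not] using card_sdiff_comm h

section LinearOrder

variable {α : Type*} [Fintype α] [LinearOrder α] (σ : Perm α)

/-- The set of strict excedances of a permutation, i.e. of the starting points of its upper arcs. -/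
def excedances : Finset α := {i | i < σ i}

/-- The set of strict anti-excedances of a permutation, i.e. of the starting points of its lower
arcs. -/
def antiexcedances : Finset α := {i | σ i < i}

/-- The crossings between upper arcs `i → σ i`, as pairs of starting points. Two upper arcs that
merely share an end point do not count as crossing. -/
def upperCrossings : Finset (α × α) :=
  {p | p.1 < p.2 ∧ p.2 < σ p.1 ∧ σ p.1 < σ p.2}

/-- The crossings between lower arcs `i → σ i`, as pairs of starting points. In contrast with
`upperCrossings`, two lower arcs that merely share an end point do count as crossing. -/
def lowerCrossings : Finset (α × α) :=
  {p | σ p.1 < σ p.2 ∧ σ p.2 ≤ p.1 ∧ p.1 < p.2}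

theorem card_antiexcedances_inv : #(antiexcedances σ⁻¹) = #(excedances σ) :=
  (card_equiv σ (by simp [excedances, antiexcedances])).symm

variable {σ}

theorem card_excedances_add_card_antiexcedances (hσ : ∀ i, σ i ≠ i) :
    #(excedances σ) + #(antiexcedances σ) = Fintype.card α := by
  have h : antiexcedances σ = ({i | ¬ i < σ i} : Finset α) := by
    ext i
    simp [antiexcedances, (hσ i).le_iff_lt]
  rw [h, excedances, card_filter_add_card_filter_not, card_univ]

theorem card_antiexcedances_eq_of_lt_apply {e : α} (he : e < σ e) :
    #(antiexcedances σ) = #{d | σ d < d ∧ d < e} + #{d | σ e < σ d ∧ σ d < d} +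
      #{d | σ d ≤ e ∧ e < d} + #{d ∈ antiexcedances σ | e < σ d ∧ σ d < σ e} := by
  rw [← card_union_of_disjoint, ← card_union_of_disjoint, ← card_union_of_disjoint]
  · congr 1
    ext d
    have hinj : σ d = σ e ↔ d = e := σ.injective.eq_iff
    grind [antiexcedances]
  all_goals grind [disjoint_left]

theorem card_filter_apply_le_and_lt {e : α} (he : e < σ e) :
    #{d | σ d ≤ e ∧ e < d} =
      #{i | i < e ∧ σ e < σ i} + #{i | i < e ∧ e < σ i ∧ σ i < σ e} + 1 := by
  have hcut := card_filter_and_not_apply_eq_card_filter_apply_and_not σ (· ≤ e)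
  simp only [not_le] at hcut
  rw [← hcut, ← card_singleton e, ← card_union_of_disjoint, ← card_union_of_disjoint]
  · congr 1
    ext i
    have hinj : σ i = σ e ↔ i = e := σ.injective.eq_iff
    grind
  all_goals grind [disjoint_left]

theorem card_filter_lt_apply_and_apply_lt {d : α} (hd : σ d < d) :
    #{e ∈ excedances σ | e < σ d ∧ σ d < σ e} =
      #{i | d < i ∧ σ i < σ d} + #{i | σ i < σ d ∧ σ d ≤ i ∧ i < d} := by
  have hcut := card_filter_and_not_apply_eq_card_filter_apply_and_not σ (· < σ d)
  simp only [not_lt] at hcut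
  calc #{e ∈ excedances σ | e < σ d ∧ σ d < σ e}
      = #{e | e < σ d ∧ σ d ≤ σ e} := by
        congr 1
        ext e
        have hinj : σ e = σ d ↔ e = d := σ.injective.eq_iff
        grind [excedances]
    _ = #{i | σ i < σ d ∧ σ d ≤ i} := hcut
    _ = #{i | d < i ∧ σ i < σ d} + #{i | σ i < σ d ∧ σ d ≤ i ∧ i < d} := by
        rw [← card_union_of_disjoint]
        · congr 1
          grind
        · grind [disjoint_left]

variable (σ)

theorem card_upperCrossings :
    #(upperCrossings σ) = ∑ e ∈ excedances σ, #{i | i < e ∧ e < σ i ∧ σ i < σ e} :=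
  card_eq_sum_card_filter_right (by grind [upperCrossings, excedances])

theorem card_lowerCrossings :
    #(lowerCrossings σ) = ∑ d ∈ antiexcedances σ, #{i | σ i < σ d ∧ σ d ≤ i ∧ i < d} :=
  card_eq_sum_card_filter_right (by grind [lowerCrossings, antiexcedances])

end LinearOrder

section Fin

variable {n : ℕ} (σ : Perm (Fin n))

theorem aP_eq_sum : aP n σ = ∑ e ∈ excedances σ, #{i | i < e ∧ σ e < σ i} :=
  card_eq_sum_card_filter_right (by grind [excedances])

theorem atP_eq_sum : atP n σ = ∑ d ∈ antiexcedances σ, #{i | d < i ∧ σ i < σ d} :=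
  card_eq_sum_card_filter_left (by grind [antiexcedances])

theorem bP_eq_sum : bP n σ = ∑ e ∈ excedances σ, #{d | σ d < d ∧ d < e} :=
  card_eq_sum_card_filter_right (by grind [excedances])

theorem btP_eq_sum : btP n σ = ∑ e ∈ excedances σ, #{d | σ e < σ d ∧ σ d < d} :=
  card_eq_sum_card_filter_left (by grind [excedances])

theorem sum_card_filter_apply_le_and_lt :
    ∑ e ∈ excedances σ, #{d | σ d ≤ e ∧ e < d} =
      aP n σ + #(upperCrossings σ) + #(excedances σ) := by
  rw [aP_eq_sum, card_upperCrossings, card_eq_sum_ones, ← sum_add_distrib, ← sum_add_distrib]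
  exact sum_congr rfl fun e he => card_filter_apply_le_and_lt (mem_filter.mp he).2

theorem sum_card_filter_lt_apply_and_apply_lt :
    ∑ e ∈ excedances σ, #{d ∈ antiexcedances σ | e < σ d ∧ σ d < σ e} =
      atP n σ + #(lowerCrossings σ) := by
  rw [atP_eq_sum, card_lowerCrossings, ← sum_add_distrib]
  exact (sum_card_bipartiteAbove_eq_sum_card_bipartiteBelow fun e d => e < σ d ∧ σ d < σ e).trans
    (sum_congr rfl fun d hd => card_filter_lt_apply_and_apply_lt (mem_filter.mp hd).2)

theorem NP_add_card_crossings_add_card_excedances :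
    NP n σ + (#(upperCrossings σ) + #(lowerCrossings σ)) + #(excedances σ) =
      #(excedances σ) * #(antiexcedances σ) := by
  have hpairs : #(excedances σ) * #(antiexcedances σ) =
      bP n σ + btP n σ + (aP n σ + #(upperCrossings σ) + #(excedances σ)) +
        (atP n σ + #(lowerCrossings σ)) := by
    rw [← smul_eq_mul, ← sum_const, bP_eq_sum, btP_eq_sum, ← sum_card_filter_apply_le_and_lt,
      ← sum_card_filter_lt_apply_and_apply_lt, ← sum_add_distrib, ← sum_add_distrib,
      ← sum_add_distrib]
    exact sum_congr rfl fun e he => card_antiexcedances_eq_of_lt_apply (mem_filter.mp he).2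
  rw [hpairs, NP]
  ring

theorem aP_inv : aP n σ⁻¹ = atP n σ :=
  (card_equiv ((prodCongr σ σ).trans (prodComm _ _)) (by simp)).symm

theorem bP_inv : bP n σ⁻¹ = btP n σ :=
  (card_equiv (prodCongr σ σ) (by simp)).symm

theorem NP_inv : NP n σ⁻¹ = NP n σ := by
  have hat : atP n σ⁻¹ = aP n σ := by rw [← aP_inv, inv_inv]
  have hbt : btP n σ⁻¹ = bP n σ := by rw [← bP_inv, inv_inv]
  rw [NP, NP, aP_inv, hat, bP_inv, hbt]
  ring

end Fin

namespace Wnr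

variable {n r : ℕ} {σ : Perm (Fin n)}

theorem card_antiexcedances (h : Wnr n r σ) : #(antiexcedances σ) = r := h.2

theorem card_excedances_add (h : Wnr n r σ) : #(excedances σ) + r = n := by
  simpa [h.card_antiexcedances] using card_excedances_add_card_antiexcedances h.1

theorem inv (h : Wnr n r σ) : Wnr n (n - r) σ⁻¹ := by
  have hcard : #(antiexcedances σ⁻¹) = n - r :=
    (card_antiexcedances_inv σ).trans (Nat.eq_sub_of_add_eq h.card_excedances_add)
  exact ⟨fun i hi => h.1 i (Perm.inv_eq_iff_eq.mp hi).symm, hcard⟩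

theorem NP_add_card_crossings (h : Wnr n r σ) :
    NP n σ + (#(upperCrossings σ) + #(lowerCrossings σ)) = (r - 1) * (n - r) := by
  have hcount := NP_add_card_crossings_add_card_excedances σ
  rw [h.card_antiexcedances, Nat.eq_sub_of_add_eq h.card_excedances_add] at hcount
  rw [Nat.eq_sub_of_add_eq hcount, Nat.sub_one_mul, mul_comm]

theorem NP_le (h : Wnr n r σ) : NP n σ ≤ min ((r - 1) * (n - r)) (r * (n - r - 1)) := by
  have hr : r ≤ n := h.card_excedances_add ▸ Nat.le_add_left _ _
  have hinv := h.inv.NP_add_card_crossings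
  rw [NP_inv, Nat.sub_sub_self hr, mul_comm] at hinv
  exact le_min (h.NP_add_card_crossings ▸ Nat.le_add_right _ _) (hinv ▸ Nat.le_add_right _ _)

end Wnr

section NestedCycle

/-- The permutation of `{0, …, n - 1}` that has the concentric transpositions `(i, n - 1 - i)`,
`i < k`, around the cycle `k → k + 1 → ⋯ → n - 1 - k → k`. It has no crossings, and it attains the
maximum of `N_σ` for `r = k + 1` if `2 * r ≤ n`. If `n ≤ 2 * k + 1`, there is no room for the cycle
and it is the reversal. -/
def nestedCycle (n k : ℕ) : Perm (Fin n) where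
  toFun i := if h : k ≤ i.val ∧ i.val + k + 1 < n then ⟨i + 1, by lia⟩ else i.rev
  invFun j := if h : k < j.val ∧ j.val + k < n then ⟨j - 1, by lia⟩ else j.rev
  left_inv i := by grind
  right_inv j := by grind

variable {n k : ℕ}

theorem val_nestedCycle (i : Fin n) : (nestedCycle n k i).val =
    if k ≤ i.val ∧ i.val + k + 1 < n then i.val + 1 else n - 1 - i.val := by
  simp only [nestedCycle, coe_fn_mk]
  split_ifs <;> grind

theorem upperCrossings_nestedCycle : upperCrossings (nestedCycle n k) = ∅ := by
  simp only [upperCrossings, filter_eq_empty_iff, Fin.lt_def, val_nestedCycle]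
  grind

theorem lowerCrossings_nestedCycle : lowerCrossings (nestedCycle n k) = ∅ := by
  simp only [lowerCrossings, filter_eq_empty_iff, Fin.lt_def, Fin.le_def, val_nestedCycle]
  grind

theorem wnr_nestedCycle (h : 2 * (k + 1) ≤ n) : Wnr n (k + 1) (nestedCycle n k) := by
  have hexc : excedances (nestedCycle n k) = ({i | i.val < n - (k + 1)} : Finset (Fin n)) := by
    ext i
    simp only [excedances, mem_filter_univ, Fin.lt_def, val_nestedCycle]
    grind
  have hfix (i : Fin n) : nestedCycle n k i ≠ i := by
    rw [ne_eq, Fin.ext_iff, val_nestedCycle]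
    grind
  have hcard := card_excedances_add_card_antiexcedances hfix
  rw [hexc, Fin.card_filter_val_lt, Fintype.card_fin] at hcard
  exact ⟨hfix, show #(antiexcedances _) = k + 1 by lia⟩

theorem NP_nestedCycle (h : 2 * (k + 1) ≤ n) : NP n (nestedCycle n k) = k * (n - (k + 1)) := by
  simpa [upperCrossings_nestedCycle, lowerCrossings_nestedCycle] using
    (wnr_nestedCycle h).NP_add_card_crossings

end NestedCycle

theorem exists_wnr_le_NP {n r : ℕ} (hr : 1 ≤ r) (hrn : r < n) : ∃ σ : Perm (Fin n),
    Wnr n r σ ∧ min ((r - 1) * (n - r)) (r * (n - r - 1)) ≤ NP n σ := by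
  rcases le_total (2 * r) n with h | h
  · obtain ⟨k, rfl⟩ := Nat.exists_eq_add_of_le' hr
    exact ⟨nestedCycle n k, wnr_nestedCycle h, NP_nestedCycle h ▸ min_le_left _ _⟩
  · obtain ⟨k, rfl⟩ : ∃ k, n = r + (k + 1) := Nat.exists_eq_add_of_lt hrn
    have hk : 2 * (k + 1) ≤ r + (k + 1) := by lia
    refine ⟨(nestedCycle _ k)⁻¹, by simpa using (wnr_nestedCycle hk).inv, ?_⟩
    rw [NP_inv, NP_nestedCycle hk]
    simp [mul_comm]

end Pap

theorem stmt16 (n r : ℕ) (hn : 2 ≤ n) (hr1 : 1 ≤ r) (hr2 : r ≤ n - 1) :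
    (∃ σ : Equiv.Perm (Fin n), Pap.Wnr n r σ ∧
        Pap.NP n σ = min ((r - 1) * (n - r)) (r * (n - r - 1))) ∧
      IsGreatest {k : ℕ | ∃ σ : Equiv.Perm (Fin n), Pap.Wnr n r σ ∧ Pap.NP n σ = k}
        (min ((r - 1) * (n - r)) (r * (n - r - 1))) := by
  obtain ⟨σ, hσ, hle⟩ := Pap.exists_wnr_le_NP hr1 (show r < n by lia)
  have hmax := hσ.NP_le.antisymm hle
  refine ⟨⟨σ, hσ, hmax⟩, ⟨σ, hσ, hmax⟩, ?_⟩
  rintro _ ⟨τ, hτ, rfl⟩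
  exact hτ.NP_le
end
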